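/- arXiv:2503.21002 — 2 statements merged into one kernel-verified Lean document; each statement's English description precedes it below -/
import Mathlib

section
/- Identification of the η-divergence with the quantum chi-square divergence: For density operators ρ and σ on a finite-dimensional Hilbert space with σ invertible, the second derivative of the quantum relative entropy along the mixture segment equals the explicit η-divergence: (∂²/∂α²) D(αρ + (1−α)σ || σ)|_{α=0} = η(ρ||σ), where, for a spectral decomposition σ = Σ_i λ_i Π_i with distinct eigenvalues λ_i and orthogonal eigenprojectors Π_i, η(ρ||σ) = Σ_{i≠j} ((log λ_i − log λ_j)/(λ_i − λ_j)) Tr[(ρ−σ)Π_i(ρ−σ)Π_j] + Σ_i (1/λ_i) Tr[(ρ−σ)Π_i(ρ−σ)Π_i]. Equivalently, D(αρ + (1−α)σ || σ) = (1/2)α² η(ρ||σ) + O(α³) as α → 0. -/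
open Matrix Filter
open scoped Kronecker Classical ComplexOrder

noncomputable section

namespace CovertPaper



variable {ι : Type*} [Fintype ι] [DecidableEq ι]

/-- `ρ` is a density matrix (state). -/
def IsDensity (ρ : Matrix ι ι ℂ) : Prop := ρ.PosSemidef ∧ ρ.trace = 1

/-- `supp ρ ⊆ supp σ`, expressed (for Hermitian PSD matrices) as `ker σ ⊆ ker ρ`. -/
def SuppLE (ρ σ : Matrix ι ι ℂ) : Prop :=
  ∀ v : ι → ℂ, σ.mulVec v = 0 → ρ.mulVec v = 0

/-- Functional calculus on Hermitian matrices (junk value `0` otherwise). -/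
def matFun (f : ℝ → ℝ) (A : Matrix ι ι ℂ) : Matrix ι ι ℂ :=
  if hA : A.IsHermitian then
    (hA.eigenvectorUnitary : Matrix ι ι ℂ) *
      diagonal (fun i => (f (hA.eigenvalues i) : ℂ)) *
      (star (hA.eigenvectorUnitary : Matrix ι ι ℂ))
  else 0

/-- Matrix logarithm of a Hermitian matrix (`0` on the kernel, by `Real.log 0 = 0`). -/
def matLog (A : Matrix ι ι ℂ) : Matrix ι ι ℂ := matFun Real.log A

/-- Trace norm `‖A‖₁ = Tr √(AᴴA)`. -/
def traceNorm (A : Matrix ι ι ℂ) : ℝ := ((matFun Real.sqrt (Aᴴ * A)).trace).re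

/-- Fidelity `F(ρ,σ) = ‖√ρ√σ‖₁²`. -/
def fidelity (ρ σ : Matrix ι ι ℂ) : ℝ :=
  (traceNorm (matFun Real.sqrt ρ * matFun Real.sqrt σ)) ^ 2

/-- von Neumann entropy `H(ρ) = −Tr[ρ log ρ]` (natural logarithm). -/
def vnEnt (ρ : Matrix ι ι ℂ) : ℝ := -((ρ * matLog ρ).trace).re

/-- Quantum (Umegaki) relative entropy `D(ρ‖σ) = Tr[ρ (log ρ − log σ)]`; this real-valued
formula agrees with the usual definition whenever `supp ρ ⊆ supp σ`. -/
def relEnt (ρ σ : Matrix ι ι ℂ) : ℝ := ((ρ * (matLog ρ - matLog σ)).trace).re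

/-- The quantum chi-square divergence
`χ²(ρ‖σ) = (∂²/∂α²) D(αρ + (1−α)σ ‖ σ) |_{α=0}`. -/
def chiSq (ρ σ : Matrix ι ι ℂ) : ℝ :=
  iteratedDeriv 2 (fun α : ℝ => relEnt ((α : ℂ) • ρ + ((1 - α : ℝ) : ℂ) • σ) σ) 0

section PTrace

variable {α β : Type*} [Fintype α] [Fintype β]

/-- Partial trace over the second (right) tensor factor. -/
def ptraceRight (ρ : Matrix (α × β) (α × β) ℂ) : Matrix α α ℂ :=
  of fun a a' => ∑ b, ρ (a, b) (a', b)

/-- Partial trace over the first (left) tensor factor. -/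
def ptraceLeft (ρ : Matrix (α × β) (α × β) ℂ) : Matrix β β ℂ :=
  of fun b b' => ∑ a, ρ (a, b) (a, b')

/-- The product state `⊗_{i=1}^n ω_{x_i}` associated with a classical string `x^n`. -/
def stringState {d : ℕ} (ω : Fin d → Matrix β β ℂ) {n : ℕ} (x : Fin n → Fin d) :
    Matrix (Fin n → β) (Fin n → β) ℂ :=
  of fun a b => ∏ i, ω (x i) (a i) (b i)

/-- The `n`-fold tensor power `ω^{⊗n}`. -/
def tpow (ω : Matrix β β ℂ) (n : ℕ) : Matrix (Fin n → β) (Fin n → β) ℂ :=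
  of fun a b => ∏ i, ω (a i) (b i)

end PTrace

/-- Asymptotic little-o : `f ∈ o(g)` iff `f/g → 0`. -/
def LittleO (f g : ℕ → ℝ) : Prop :=
  Tendsto (fun n => f n / g n) atTop (nhds 0)

/-- Asymptotic little-omega : `f ∈ ω(g)` iff `|f/g| → ∞`. -/
def LittleOmega (f g : ℕ → ℝ) : Prop :=
  Tendsto (fun n => |f n / g n|) atTop atTop

section CQ

variable {B W : Type*} [Fintype B] [DecidableEq B] [Fintype W] [DecidableEq W]

/-- Bob's reduced output `σ_x` of the classical-quantum channel `π`. -/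
def bobOut (π : Fin 2 → Matrix (B × W) (B × W) ℂ) (x : Fin 2) : Matrix B B ℂ :=
  ptraceRight (π x)

/-- Willie's reduced output `ω_x` of the classical-quantum channel `π`. -/
def willieOut (π : Fin 2 → Matrix (B × W) (B × W) ℂ) (x : Fin 2) : Matrix W W ℂ :=
  ptraceLeft (π x)

variable (π : Fin 2 → Matrix (B × W) (B × W) ℂ)

/-- Bob's output state for the codeword `x^n`. -/
def bobWord {n : ℕ} (x : Fin n → Fin 2) : Matrix (Fin n → B) (Fin n → B) ℂ :=
  stringState (bobOut π) x

/-- Willie's output state for the codeword `x^n`. -/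
def willieWord {n : ℕ} (x : Fin n → Fin 2) : Matrix (Fin n → W) (Fin n → W) ℂ :=
  stringState (willieOut π) x

/-- `Λ` is a (sub-normalized) decoding POVM for each key value. -/
def IsPOVM {n M L K : ℕ} (Λ : Fin K → Fin M → Fin L → Matrix (Fin n → B) (Fin n → B) ℂ) :
    Prop :=
  (∀ k m ℓ, (Λ k m ℓ).PosSemidef) ∧
    ∀ k, ((1 : Matrix (Fin n → B) (Fin n → B) ℂ) - ∑ m, ∑ ℓ, Λ k m ℓ).PosSemidef

/-- Average decoding error probability of a covert secrecy code. -/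
def avgErr {n M L K : ℕ} (f : Fin M → Fin L → Fin K → Fin n → Fin 2)
    (Λ : Fin K → Fin M → Fin L → Matrix (Fin n → B) (Fin n → B) ℂ) : ℝ :=
  ((M : ℝ) * L * K)⁻¹ *
    ∑ m, ∑ ℓ, ∑ k, (1 - ((Λ k m ℓ * bobWord π (f m ℓ k)).trace).re)

/-- Willie's average output state `ρ̄_{W^n}` (averaged over message, public message and key). -/
def willieAvg {n M L K : ℕ} (f : Fin M → Fin L → Fin K → Fin n → Fin 2) :
    Matrix (Fin n → W) (Fin n → W) ℂ :=
  ((((M : ℝ) * L * K)⁻¹ : ℝ) : ℂ) • ∑ m, ∑ ℓ, ∑ k, willieWord π (f m ℓ k)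

/-- Willie's state `ρ_{W^n}^{(m)}` given the secret message `m` (averaged over `ℓ` and `k`). -/
def willieMsg {n M L K : ℕ} (f : Fin M → Fin L → Fin K → Fin n → Fin 2) (m : Fin M) :
    Matrix (Fin n → W) (Fin n → W) ℂ :=
  ((((L : ℝ) * K)⁻¹ : ℝ) : ℂ) • ∑ ℓ, ∑ k, willieWord π (f m ℓ k)

/-- The covertness criterion `D(ρ̄_{W^n} ‖ ω₀^{⊗n}) ≤ δ_cov`. -/
def Covert {n M L K : ℕ} (f : Fin M → Fin L → Fin K → Fin n → Fin 2) (δcov : ℝ) : Prop :=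
  relEnt (willieAvg π f) (tpow (willieOut π 0) n) ≤ δcov

/-- The secrecy criterion: some state `ρ̆` independent of `m` is `δ_sec`-close on average. -/
def Secret {n M L K : ℕ} (f : Fin M → Fin L → Fin K → Fin n → Fin 2) (δsec : ℝ) : Prop :=
  ∃ ρ' : Matrix (Fin n → W) (Fin n → W) ℂ, IsDensity ρ' ∧
    (M : ℝ)⁻¹ * ∑ m, traceNorm (willieMsg π f m - ρ') ≤ δsec

/-- Existence of an `(|M|,|L|,|K|,n,ε,δ_cov,δ_sec)` covert secrecy code. -/
def CodeExists (n M L K : ℕ) (ε δcov δsec : ℝ) : Prop :=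
  ∃ (f : Fin M → Fin L → Fin K → Fin n → Fin 2)
    (Λ : Fin K → Fin M → Fin L → Matrix (Fin n → B) (Fin n → B) ℂ),
      IsPOVM (B := B) Λ ∧ avgErr π f Λ ≤ ε ∧ Covert π f δcov ∧ Secret π f δsec

end CQ



section Statement13

/-- The explicit η-divergence associated with a spectral decomposition
`σ = Σ_i λ_i Π_i`. -/
def etaDiv {ι : Type*} [Fintype ι] [DecidableEq ι] {s : Type*} [Fintype s]
    (lam : s → ℝ) (P : s → Matrix ι ι ℂ) (ρ σ : Matrix ι ι ℂ) : ℝ :=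
  (∑ i, ∑ j, if i = j then 0 else
    ((Real.log (lam i) - Real.log (lam j)) / (lam i - lam j)) *
      (((ρ - σ) * P i * ((ρ - σ) * P j)).trace).re) +
  ∑ i, (lam i)⁻¹ * (((ρ - σ) * P i * ((ρ - σ) * P i)).trace).re

section Banach
variable {E : Type*} [NormedRing E] [NormedAlgebra ℝ E] [CompleteSpace E]

/-- The series `∑ X^n / n = - log (1 - X)`. -/
def logS (X : E) : E := ∑' n : ℕ, ((n : ℝ)⁻¹) • X ^ n

lemma logS_summable {X : E} (hX : ‖X‖ < 1) : Summable (fun n : ℕ => ((n : ℝ)⁻¹) • X ^ n) := by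
  have hs : Summable (fun n : ℕ => ‖X ^ n‖) := summable_norm_geometric_of_norm_lt_one hX
  refine Summable.of_norm_bounded hs (fun n => ?_)
  rw [norm_smul, Real.norm_of_nonneg (by positivity)]
  exact mul_le_of_le_one_left (norm_nonneg _) (Nat.cast_inv_le_one n)

lemma logS_comm {X : E} (hX : ‖X‖ < 1) : X * logS X = logS X * X := by
  unfold logS
  rw [← (logS_summable hX).tsum_mul_left, ← (logS_summable hX).tsum_mul_right]
  congr 1; ext n
  rw [mul_smul_comm, smul_mul_assoc, pow_mul_comm']

lemma logS_analytic {X : E} (hX : ‖X‖ < 1) : AnalyticAt ℝ (logS : E → E) X := by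
  set p := FormalMultilinearSeries.ofScalars E (fun n : ℕ => ((n : ℝ)⁻¹)) with hp
  have hr : (1 : ENNReal) ≤ p.radius := by
    have := p.le_radius_of_bound (r := 1) 1 (fun n => ?_)
    · simpa using this
    · rcases Nat.eq_zero_or_pos n with rfl | hn
      · rw [hp, FormalMultilinearSeries.ofScalars_eq_zero_of_scalar_zero] <;> simp
      · have h1 := FormalMultilinearSeries.ofScalars_norm_le E (fun n : ℕ => ((n : ℝ)⁻¹)) n hn
        have h2 : ‖((n : ℝ)⁻¹)‖ ≤ 1 := by
          rw [Real.norm_of_nonneg (by positivity)]; exact Nat.cast_inv_le_one n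
        have h3 := h1.trans h2
        rw [← hp] at h3
        simp only [NNReal.coe_one, one_pow, mul_one]
        exact h3
  have hb := p.hasFPowerSeriesOnBall (lt_of_lt_of_le one_pos hr)
  have he : p.sum = logS := by
    have := FormalMultilinearSeries.ofScalarsSum_eq_tsum (E := E) (fun n : ℕ => ((n : ℝ)⁻¹))
    exact this
  rw [he] at hb
  refine hb.analyticAt_of_mem ?_
  refine Metric.eball_subset_eball hr ?_
  rw [Metric.mem_eball, edist_zero_right, ← ofReal_norm]
  exact ENNReal.ofReal_lt_one.2 hX

lemma logS_deriv {X0 H : E} {a : ℝ} (hX : ‖X0 + a • H‖ < 1) :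
    ∃ L' : E, HasDerivAt (fun t : ℝ => logS (X0 + t • H)) L' a ∧
      ∀ T : E →L[ℝ] ℂ, (∀ i j : ℕ, T ((X0 + a • H) ^ i * H * (X0 + a • H) ^ j) =
        T ((X0 + a • H) ^ (i + j) * H)) →
      T L' = T ((∑' n : ℕ, (X0 + a • H) ^ n) * H) := by
  obtain ⟨r, hr1, hr2⟩ := exists_between hX
  have hr0 : 0 ≤ r := (norm_nonneg _).trans hr1.le
  have hcont : Continuous (fun t : ℝ => ‖X0 + t • H‖) := by fun_prop
  have hopen : IsOpen {t : ℝ | ‖X0 + t • H‖ < r} := isOpen_lt hcont continuous_const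
  obtain ⟨ε, hε, hball⟩ := Metric.isOpen_iff.1 hopen a hr1
  have hXd : ∀ t : ℝ, HasDerivAt (fun t : ℝ => X0 + t • H) H t := fun t => by
    simpa using ((hasDerivAt_id t).smul_const H).const_add X0
  let g' : ℕ → ℝ → E := fun n t => ((n : ℝ)⁻¹) •
    ∑ i ∈ Finset.range n, (X0 + t • H) ^ (n.pred - i) * H * (X0 + t • H) ^ i
  -- bound
  let K : ℝ := max 1 ‖(1 : E)‖
  have hK : 1 ≤ K := le_max_left _ _
  have hpow : ∀ t ∈ Metric.ball a ε, ∀ n : ℕ, ‖(X0 + t • H) ^ n‖ ≤ K * r ^ n := by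
    intro t ht n
    have ht' : ‖X0 + t • H‖ < r := hball ht
    rcases Nat.eq_zero_or_pos n with rfl | hn
    · simp [K]
    · calc _ ≤ ‖X0 + t • H‖ ^ n := norm_pow_le' _ hn
        _ ≤ r ^ n := by gcongr
        _ ≤ K * r ^ n := le_mul_of_one_le_left (by positivity) hK
  have hbound : ∀ n t, t ∈ Metric.ball a ε → ‖g' n t‖ ≤ (K * K * ‖H‖) * r ^ n.pred := by
    intro n t ht
    have h1 : ‖∑ i ∈ Finset.range n, (X0 + t • H) ^ (n.pred - i) * H * (X0 + t • H) ^ i‖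
        ≤ ∑ i ∈ Finset.range n, (K * K * ‖H‖) * r ^ n.pred := by
      refine norm_sum_le_of_le _ (fun i hi => ?_)
      have hi' : i < n := Finset.mem_range.1 hi
      have hle : n.pred - i + i = n.pred := by simp only [Nat.pred_eq_sub_one]; omega
      calc _ ≤ ‖(X0 + t • H) ^ (n.pred - i)‖ * ‖H‖ * ‖(X0 + t • H) ^ i‖ := norm_mul₃_le
        _ ≤ (K * r ^ (n.pred - i)) * ‖H‖ * (K * r ^ i) := by
          gcongr
          · exact hpow t ht _
          · exact hpow t ht _
        _ = (K * K * ‖H‖) * r ^ (n.pred - i + i) := by rw [pow_add]; ring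
        _ = _ := by rw [hle]
    rw [Finset.sum_const, Finset.card_range, nsmul_eq_mul] at h1
    rw [norm_smul, Real.norm_of_nonneg (by positivity)]
    rcases Nat.eq_zero_or_pos n with rfl | hn
    · simp; positivity
    · have hn' : (0 : ℝ) < n := by exact_mod_cast hn
      rw [inv_mul_le_iff₀ hn']; exact h1
  have hu : Summable (fun n : ℕ => (K * K * ‖H‖) * r ^ n.pred) := by
    rw [← summable_nat_add_iff 1]
    simpa using (summable_geometric_of_lt_one hr0 hr2).mul_left (K * K * ‖H‖)
  have ha : a ∈ Metric.ball a ε := Metric.mem_ball_self hε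
  refine ⟨∑' n, g' n a, ?_, ?_⟩
  · refine hasDerivAt_tsum_of_isPreconnected hu Metric.isOpen_ball
      (convex_ball a ε).isPreconnected (g := fun (n : ℕ) (t : ℝ) => ((n : ℝ)⁻¹) • (X0 + t • H) ^ n) (g' := g')
      ?_ hbound ha (logS_summable hX) ha
    intro n t _
    exact ((hXd t).fun_pow' n).const_smul ((n : ℝ)⁻¹)
  · intro T hT
    have hsum : Summable (fun n => g' n a) := Summable.of_norm_bounded hu (fun n => hbound n a ha)
    have hgeo := summable_geometric_of_norm_lt_one hX
    rw [T.map_tsum hsum, ← hgeo.tsum_mul_right, T.map_tsum (hgeo.mul_right H)]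
    have hterm : ∀ n, T (g' (n + 1) a) = T ((X0 + a • H) ^ n * H) := by
      intro n
      simp only [g', map_smul, map_sum]
      rw [Finset.sum_congr rfl (g := fun _ => T ((X0 + a • H) ^ n * H))]
      · rw [Finset.sum_const, Finset.card_range, ← Nat.cast_smul_eq_nsmul ℝ, smul_smul,
          inv_mul_cancel₀ (by positivity), one_smul]
      · intro i hi
        have hi' : i < n + 1 := Finset.mem_range.1 hi
        rw [hT]; congr 3; simp only [Nat.pred_eq_sub_one]; omega
    have hs2 : Summable (fun n => T (g' n a)) := hsum.mapL T
    rw [hs2.tsum_eq_zero_add]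
    simp only [hterm]
    simp [g']
end Banach

section Mat
open scoped Matrix.Norms.L2Operator

variable {n : Type*} [Fintype n] [DecidableEq n]

lemma matFun_mul_eig (f : ℝ → ℝ) {A P : Matrix n n ℂ} (hA : A.IsHermitian) {l : ℝ}
    (h : A * P = (l : ℂ) • P) : matFun f A * P = (f l : ℂ) • P := by
  unfold matFun
  rw [dif_pos hA]
  set U : Matrix n n ℂ := (hA.eigenvectorUnitary : Matrix n n ℂ) with hU
  have hUU : star U * U = 1 := Unitary.coe_star_mul_self hA.eigenvectorUnitary
  have hUU' : U * star U = 1 := Unitary.coe_mul_star_self hA.eigenvectorUnitary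
  have hs : A = U * diagonal (fun i => (hA.eigenvalues i : ℂ)) * star U := by
    have := hA.spectral_theorem
    rw [Unitary.conjStarAlgAut_apply] at this
    exact this
  have h1 : diagonal (fun i => (hA.eigenvalues i : ℂ)) * (star U * P) = (l : ℂ) • (star U * P) := by
    rw [← mul_smul_comm, ← h]
    nth_rewrite 2 [hs]
    simp only [← mul_assoc]
    rw [hUU, one_mul]
  have h2 : diagonal (fun i => (f (hA.eigenvalues i) : ℂ)) * (star U * P)
      = (f l : ℂ) • (star U * P) := by
    ext i j
    have h3 := congrFun (congrFun h1 i) j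
    rw [diagonal_mul, Matrix.smul_apply, smul_eq_mul] at h3 ⊢
    by_cases h0 : (star U * P) i j = 0
    · rw [h0]; simp
    · have := mul_right_cancel₀ h0 h3
      rw [Complex.ofReal_injective this]
  rw [mul_assoc, mul_assoc, h2, mul_smul_comm, ← mul_assoc, hUU', one_mul]

lemma matFun_isHermitian (f : ℝ → ℝ) (A : Matrix n n ℂ) : (matFun f A).IsHermitian := by
  unfold matFun
  split_ifs with hA
  · unfold Matrix.IsHermitian
    rw [conjTranspose_mul, conjTranspose_mul, diagonal_conjTranspose, star_eq_conjTranspose,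
      conjTranspose_conjTranspose, mul_assoc]
    congr 3
    ext i; simp
  · exact isHermitian_zero

lemma eig_mul_matFun (f : ℝ → ℝ) {A P : Matrix n n ℂ} (hA : A.IsHermitian) (hP : P.IsHermitian)
    {l : ℝ} (h : A * P = (l : ℂ) • P) : P * matFun f A = (f l : ℂ) • P := by
  have := congrArg conjTranspose (matFun_mul_eig f hA h)
  rw [conjTranspose_mul, (matFun_isHermitian f A).eq, hP.eq, conjTranspose_smul, hP.eq] at this
  simpa using this

lemma one_sub_conj {A : Matrix n n ℂ} (hA : A.IsHermitian) :
    1 - A = (hA.eigenvectorUnitary : Matrix n n ℂ) *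
      diagonal (fun i => ((1 - hA.eigenvalues i : ℝ) : ℂ)) *
      (star (hA.eigenvectorUnitary : Matrix n n ℂ)) := by
  set U : Matrix n n ℂ := (hA.eigenvectorUnitary : Matrix n n ℂ) with hU
  have hUU' : U * star U = 1 := Unitary.coe_mul_star_self hA.eigenvectorUnitary
  have hs : A = U * diagonal (fun i => (hA.eigenvalues i : ℂ)) * star U := by
    have := hA.spectral_theorem
    rw [Unitary.conjStarAlgAut_apply] at this
    exact this
  have hd : diagonal (fun i => ((1 - hA.eigenvalues i : ℝ) : ℂ)) =
      (1 : Matrix n n ℂ) - diagonal (fun i => (hA.eigenvalues i : ℂ)) := by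
    rw [← diagonal_one, diagonal_sub]; congr 1; ext i; simp
  rw [hd, mul_sub, sub_mul, mul_one, hUU', ← hs]

lemma norm_one_sub_eq {A : Matrix n n ℂ} (hA : A.IsHermitian) :
    ‖1 - A‖ = ‖(fun i => ((1 - hA.eigenvalues i : ℝ) : ℂ))‖ := by
  rw [one_sub_conj hA, ← Unitary.coe_star, CStarRing.norm_mul_coe_unitary,
    CStarRing.norm_coe_unitary_mul, l2_opNorm_diagonal]

lemma matLog_eq {A : Matrix n n ℂ} (hA : A.IsHermitian) (h1 : ‖1 - A‖ < 1) :
    matLog A = - logS (1 - A) := by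
  have hev : ∀ i, |1 - hA.eigenvalues i| < 1 := by
    intro i
    rw [norm_one_sub_eq hA] at h1
    have := (norm_le_pi_norm (fun i => ((1 - hA.eigenvalues i : ℝ) : ℂ)) i).trans_lt h1
    rwa [Complex.norm_real] at this
  unfold matLog matFun
  rw [dif_pos hA]
  set U : Matrix n n ℂ := (hA.eigenvectorUnitary : Matrix n n ℂ) with hU
  have hUU : star U * U = 1 := Unitary.coe_star_mul_self hA.eigenvectorUnitary
  have hUU' : U * star U = 1 := Unitary.coe_mul_star_self hA.eigenvectorUnitary
  have hX := one_sub_conj hA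
  rw [← hU] at hX
  have hpow : ∀ k : ℕ, (1 - A) ^ k =
      U * diagonal (fun i => (((1 - hA.eigenvalues i) ^ k : ℝ) : ℂ)) * star U := by
    intro k
    induction k with
    | zero => simp [hUU']
    | succ k ih =>
      rw [pow_succ, ih]
      nth_rewrite 1 [hX]
      simp only [mul_assoc]
      rw [← mul_assoc (star U) U, hUU, one_mul, ← mul_assoc (diagonal _) (diagonal _),
        diagonal_mul_diagonal]
      simp only [pow_succ, Complex.ofReal_mul]
  have hsc : ∀ i, HasSum (fun k : ℕ => (((k : ℝ)⁻¹ * (1 - hA.eigenvalues i) ^ k : ℝ) : ℂ))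
      ((-Real.log (hA.eigenvalues i) : ℝ) : ℂ) := by
    intro i
    have h := Real.hasSum_pow_div_log_of_abs_lt_one (hev i)
    rw [sub_sub_cancel] at h
    have h' : HasSum (fun k : ℕ => (k : ℝ)⁻¹ * (1 - hA.eigenvalues i) ^ k)
        (-Real.log (hA.eigenvalues i)) := by
      rw [← hasSum_nat_add_iff' 1]
      simpa [div_eq_inv_mul] using h
    exact Complex.hasSum_ofReal.2 h'
  have hdiag := (HasSum.matrix_diagonal (Pi.hasSum.2 hsc)).mul_left U |>.mul_right (star U)
  have hS : logS (1 - A) =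
      U * diagonal (fun i => ((-Real.log (hA.eigenvalues i) : ℝ) : ℂ)) * star U := by
    unfold logS
    rw [← hdiag.tsum_eq]
    congr 1; ext1 k
    rw [hpow, ← smul_mul_assoc, ← mul_smul_comm]
    congr 2
    rw [← diagonal_smul]
    congr 1; ext i; simp
  rw [hS, ← neg_mul, ← mul_neg, diagonal_neg]
  congr 3; ext i; simp

lemma norm_one_sub_lt {A : Matrix n n ℂ} (hA : A.PosDef) (ht : A.trace = 1) : ‖1 - A‖ < 1 := by
  rw [norm_one_sub_eq hA.1, pi_norm_lt_iff one_pos]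
  intro i
  rw [Complex.norm_real, Real.norm_eq_abs, abs_lt]
  have hpos := hA.eigenvalues_pos
  have hsum : ∑ j, hA.1.eigenvalues j = 1 := by
    have := hA.1.trace_eq_sum_eigenvalues
    rw [ht] at this
    apply Complex.ofReal_injective
    rw [Complex.ofReal_sum, Complex.ofReal_one]
    exact this.symm
  have hle : hA.1.eigenvalues i ≤ ∑ j, hA.1.eigenvalues j :=
    Finset.single_le_sum (fun j _ => (hpos j).le) (Finset.mem_univ i)
  have := hpos i
  constructor <;> linarith

/-- The functional `M ↦ Tr (C M)`. -/
def trC (C : Matrix n n ℂ) : Matrix n n ℂ →L[ℝ] ℂ where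
  toLinearMap := (Matrix.traceLinearMap n ℝ ℂ) ∘ₗ LinearMap.mulLeft ℝ C
  cont := by
    show Continuous (fun M : Matrix n n ℂ => (C * M).trace)
    fun_prop

lemma trC_apply (C M : Matrix n n ℂ) : trC C M = (C * M).trace := rfl

/-- the derivative of the logarithm, paired with something commuting with the base point -/
lemma logS_deriv_trace {X0 H : Matrix n n ℂ} {a : ℝ} (hX : ‖X0 + a • H‖ < 1) :
    ∃ L' : Matrix n n ℂ, HasDerivAt (fun t : ℝ => logS (X0 + t • H)) L' a ∧
      ∀ C : Matrix n n ℂ, Commute C (X0 + a • H) →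
        (C * (1 - (X0 + a • H)) * L').trace = (C * H).trace := by
  obtain ⟨L', hL, hT⟩ := logS_deriv hX
  refine ⟨L', hL, fun C hC => ?_⟩
  set X := X0 + a • H
  have hC1 : Commute (C * (1 - X)) X :=
    Commute.mul_left hC ((Commute.one_left X).sub_left (Commute.refl X))
  have := hT (trC (C * (1 - X))) (fun i j => ?_)
  · rw [trC_apply, trC_apply, ← mul_assoc] at this
    rw [this, mul_assoc C, mul_neg_geom_series X hX, mul_one]
  · generalize C * (1 - X) = Y at hC1
    rw [trC_apply, trC_apply, ← mul_assoc, trace_mul_comm, ← mul_assoc, ← mul_assoc, ← mul_assoc,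
      ← (hC1.pow_right j).eq, add_comm i j, pow_add, ← mul_assoc]

lemma eta_alg {s : Type*} [Fintype s] [DecidableEq s]
    (ρ σ : Matrix n n ℂ) (hσpd : σ.PosDef)
    (lam : s → ℝ) (P : s → Matrix n n ℂ)
    (hinj : Function.Injective lam)
    (hherm : ∀ i, (P i).IsHermitian)
    (hproj : ∀ i, P i * P i = P i)
    (horth : ∀ i j, i ≠ j → P i * P j = 0)
    (hres : ∑ i, P i = 1)
    (hspec : σ = ∑ i, ((lam i : ℝ) : ℂ) • P i) (M : Matrix n n ℂ)
    (hcomm : (ρ - σ) * matLog σ + σ * M = matLog σ * (ρ - σ) + M * σ)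
    (hdiag : ∀ C, Commute C σ → (C * σ * M).trace = (C * (ρ - σ)).trace) :
    ((ρ - σ) * M).trace.re = etaDiv lam P ρ σ := by
  set D := ρ - σ with hD
  have hσP : ∀ i, σ * P i = (lam i : ℂ) • P i := by
    intro i
    rw [hspec, Finset.sum_mul, Finset.sum_eq_single i]
    · rw [smul_mul_assoc, hproj]
    · intro j _ hj; rw [smul_mul_assoc, horth j i hj, smul_zero]
    · simp
  have hPσ : ∀ i, P i * σ = (lam i : ℂ) • P i := by
    intro i
    rw [hspec, Finset.mul_sum, Finset.sum_eq_single i]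
    · rw [mul_smul_comm, hproj]
    · intro j _ hj; rw [mul_smul_comm, horth i j hj.symm, smul_zero]
    · simp
  have hLP : ∀ i, matLog σ * P i = (Real.log (lam i) : ℂ) • P i := fun i =>
    matFun_mul_eig Real.log hσpd.1 (hσP i)
  have hPL : ∀ i, P i * matLog σ = (Real.log (lam i) : ℂ) • P i := fun i =>
    eig_mul_matFun Real.log hσpd.1 (hherm i) (hσP i)
  have hlam0 : ∀ i, lam i = 0 → P i = 0 := by
    intro i hi
    have h1 := hσP i
    rw [hi, Complex.ofReal_zero, zero_smul] at h1
    exact (hσpd.isUnit.mul_right_eq_zero).1 h1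
  have hoff : ∀ i j, ((lam i : ℂ) - lam j) • (P i * M * P j) =
      ((Real.log (lam i) : ℂ) - Real.log (lam j)) • (P i * D * P j) := by
    intro i j
    have h1 := congrArg (fun Z => P i * Z * P j) hcomm
    simp only [mul_add, add_mul] at h1
    have e1 : P i * (D * matLog σ) * P j = (Real.log (lam j) : ℂ) • (P i * D * P j) := by
      rw [mul_assoc, mul_assoc, hLP, mul_smul_comm, mul_smul_comm, mul_assoc]
    have e2 : P i * (σ * M) * P j = (lam i : ℂ) • (P i * M * P j) := by
      rw [← mul_assoc, hPσ, smul_mul_assoc, smul_mul_assoc]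
    have e3 : P i * (matLog σ * D) * P j = (Real.log (lam i) : ℂ) • (P i * D * P j) := by
      rw [← mul_assoc, hPL, smul_mul_assoc, smul_mul_assoc]
    have e4 : P i * (M * σ) * P j = (lam j : ℂ) • (P i * M * P j) := by
      rw [mul_assoc, mul_assoc, hσP, mul_smul_comm, mul_smul_comm, mul_assoc]
    rw [e1, e2, e3, e4] at h1
    rw [sub_smul, sub_smul, sub_eq_sub_iff_add_eq_add, add_comm, h1]
  have hexp : (D * M).trace = ∑ i, ∑ j, (D * (P i * M * P j)).trace := by
    have h1 : D * M = ∑ i, ∑ j, D * (P i * M * P j) := by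
      simp only [← Finset.mul_sum, ← Finset.sum_mul, hres, mul_one, one_mul]
    rw [h1, trace_sum]
    exact Finset.sum_congr rfl (fun i _ => trace_sum _ _)
  have hre : (D * M).trace.re = ∑ i, ∑ j, ((D * (P i * M * P j)).trace).re := by
    rw [hexp, Complex.re_sum]
    exact Finset.sum_congr rfl (fun i _ => Complex.re_sum _ _)
  have hO : ∀ i j, i ≠ j → ((D * (P i * M * P j)).trace).re =
      ((Real.log (lam i) - Real.log (lam j)) / (lam i - lam j)) *
      ((D * P i * (D * P j)).trace).re := by
    intro i j hij
    have hne : lam i - lam j ≠ 0 := sub_ne_zero.2 (fun h => hij (hinj h))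
    have h1 := congrArg (fun Z => ((D * Z).trace).re) (hoff i j)
    simp only [← Complex.ofReal_sub, mul_smul_comm, trace_smul, smul_eq_mul,
      Complex.re_ofReal_mul] at h1
    rw [div_mul_eq_mul_div, eq_div_iff hne, mul_comm, h1]
    simp only [mul_assoc]
  have hDg : ∀ i, ((D * (P i * M * P i)).trace).re =
      (lam i)⁻¹ * ((D * P i * (D * P i)).trace).re := by
    intro i
    by_cases h0 : lam i = 0
    · simp [hlam0 i h0]
    · have hC : Commute (P i * D * P i) σ := by
        show P i * D * P i * σ = σ * (P i * D * P i)
        rw [mul_assoc, hPσ, ← mul_assoc σ, ← mul_assoc σ, hσP, mul_smul_comm, smul_mul_assoc,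
          smul_mul_assoc]
      have h1 := hdiag _ hC
      rw [mul_assoc (P i * D), hPσ, mul_smul_comm, smul_mul_assoc, trace_smul, smul_eq_mul] at h1
      have h2 := congrArg Complex.re h1
      rw [Complex.re_ofReal_mul] at h2
      have e1 : (D * (P i * M * P i)).trace = (P i * D * P i * M).trace := by
        rw [← mul_assoc, trace_mul_comm]; simp only [mul_assoc]
      have e2 : (D * P i * (D * P i)).trace = (P i * D * P i * D).trace := by
        rw [← mul_assoc, trace_mul_comm]; simp only [mul_assoc]
      rw [e1, e2, ← h2, inv_mul_cancel_left₀ h0]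
  rw [hre]
  unfold etaDiv
  rw [← Finset.sum_add_distrib]
  refine Finset.sum_congr rfl (fun i _ => ?_)
  rw [← Finset.sum_erase_add _ _ (Finset.mem_univ i), hDg i]
  congr 1
  refine Eq.trans (Finset.sum_congr rfl (fun j hj => ?_))
    (Finset.sum_erase (a := i) Finset.univ (if_pos rfl))
  have hij : i ≠ j := (Finset.ne_of_mem_erase hj).symm
  rw [if_neg hij, hO i j hij]

lemma core {s : Type*} [Fintype s] [DecidableEq s]
    (ρ σ : Matrix n n ℂ) (hρ : IsDensity ρ) (hσ : IsDensity σ) (hσpd : σ.PosDef)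
    (lam : s → ℝ) (P : s → Matrix n n ℂ)
    (hinj : Function.Injective lam)
    (hherm : ∀ i, (P i).IsHermitian)
    (hproj : ∀ i, P i * P i = P i)
    (horth : ∀ i j, i ≠ j → P i * P j = 0)
    (hres : ∑ i, P i = 1)
    (hspec : σ = ∑ i, ((lam i : ℝ) : ℂ) • P i) (f : ℝ → ℝ)
    (hf : f = fun α : ℝ => relEnt ((α : ℂ) • ρ + ((1 - α : ℝ) : ℂ) • σ) σ) :
    AnalyticAt ℝ f 0 ∧ f 0 = 0 ∧ deriv f 0 = 0 ∧ iteratedDeriv 2 f 0 = etaDiv lam P ρ σ := by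
  set X0 : Matrix n n ℂ := 1 - σ with hX0
  set H : Matrix n n ℂ := σ - ρ with hH
  set L0 := matLog σ with hL0
  have hA : ∀ α : ℝ, (α : ℂ) • ρ + ((1 - α : ℝ) : ℂ) • σ = 1 - (X0 + α • H) := by
    intro α
    rw [hX0, hH, ← Complex.coe_smul α (σ - ρ), smul_sub]
    push_cast
    rw [sub_smul, one_smul]; abel
  have hherA : ∀ α : ℝ, ((α : ℂ) • ρ + ((1 - α : ℝ) : ℂ) • σ).IsHermitian := by
    intro α
    unfold Matrix.IsHermitian
    rw [conjTranspose_add, conjTranspose_smul, conjTranspose_smul, hρ.1.1.eq, hσ.1.1.eq]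
    simp
  have hn0 : ‖X0 + (0 : ℝ) • H‖ < 1 := by
    simpa [hX0] using norm_one_sub_lt hσpd hσ.2
  have hcont : Continuous (fun t : ℝ => ‖X0 + t • H‖) := by fun_prop
  have hev : ∀ᶠ a : ℝ in nhds 0, ‖X0 + a • H‖ < 1 :=
    hcont.continuousAt.eventually_lt continuousAt_const hn0
  let R : Matrix n n ℂ →L[ℝ] ℝ := Complex.reCLM.comp (trC 1)
  have hR : ∀ Z, R Z = Z.trace.re := fun Z => by
    simp [R, trC_apply]
  let g : ℝ → ℝ := fun α => R ((1 - (X0 + α • H)) * (- logS (X0 + α • H) - L0))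
  have hfg : f =ᶠ[nhds 0] g := by
    filter_upwards [hev] with a ha
    have h1 : matLog ((a : ℂ) • ρ + ((1 - a : ℝ) : ℂ) • σ) = - logS (X0 + a • H) := by
      rw [matLog_eq (hherA a)]
      · rw [hA, sub_sub_cancel]
      · rw [hA, sub_sub_cancel]; exact ha
    rw [hf]
    simp only [g, hR, relEnt]
    rw [h1, hA]
  have hXan : AnalyticAt ℝ (fun t : ℝ => X0 + t • H) 0 :=
    analyticAt_const.add (analyticAt_id.smul analyticAt_const)
  have hgan : AnalyticAt ℝ g 0 := by
    have h1 : AnalyticAt ℝ (fun t : ℝ => logS (X0 + t • H)) 0 :=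
      AnalyticAt.fun_comp (g := logS) (logS_analytic hn0) hXan
    have h2 := (analyticAt_const (v := (1 : Matrix n n ℂ)).sub hXan).mul
      (h1.neg.sub (analyticAt_const (v := L0)))
    exact (R.analyticAt _).fun_comp h2
  have hXd : ∀ t : ℝ, HasDerivAt (fun t : ℝ => X0 + t • H) H t := fun t => by
    simpa using ((hasDerivAt_id t).smul_const H).const_add X0
  have htrH : H.trace = 0 := by rw [hH, trace_sub, hσ.2, hρ.2, sub_self]
  have hgd : ∀ᶠ a : ℝ in nhds 0, deriv g a = R ((-H) * (- logS (X0 + a • H) - L0)) := by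
    filter_upwards [hev] with a ha
    obtain ⟨L', hL, hT⟩ := logS_deriv_trace ha
    have h1 := ((hXd a).const_sub 1).mul (hL.neg.sub_const L0)
    have h2 := (R.hasFDerivAt.comp_hasDerivAt a h1).deriv
    have h3 := hT 1 (Commute.one_left _)
    rw [one_mul, one_mul, htrH] at h3
    refine Eq.trans h2 ?_
    rw [map_add, mul_neg, map_neg, hR ((1 - (X0 + a • H)) * L'), h3]
    simp
  have hL0' : L0 = - logS X0 := by
    have := matLog_eq hσpd.1 (norm_one_sub_lt hσpd hσ.2)
    exact this
  obtain ⟨L', hL, hT⟩ := logS_deriv_trace hn0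
  have hcomm : (ρ - σ) * L0 + σ * (-L') = L0 * (ρ - σ) + (-L') * σ := by
    have e : (fun t : ℝ => (X0 + t • H) * logS (X0 + t • H)) =ᶠ[nhds 0]
        (fun t : ℝ => logS (X0 + t • H) * (X0 + t • H)) := by
      filter_upwards [hev] with a ha
      exact logS_comm ha
    have h1 := (hXd 0).mul hL
    have h2 := hL.mul (hXd 0)
    have h3 := h1.unique (h2.congr_of_eventuallyEq e)
    simp only [zero_smul, add_zero] at h3
    rw [hL0', ← neg_sub σ ρ, ← hH]
    have hs : σ = 1 - X0 := by rw [hX0, sub_sub_cancel]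
    rw [hs]
    have h4 : H * logS X0 + X0 * L' = L' * X0 + logS X0 * H := h3
    have h5 : H * logS X0 = L' * X0 + logS X0 * H - X0 * L' := eq_sub_of_add_eq h4
    simp only [neg_mul_neg, sub_mul, mul_neg, neg_mul, mul_sub, one_mul, mul_one]
    rw [h5]; abel
  have heta := eta_alg ρ σ hσpd lam P hinj hherm hproj horth hres hspec (-L') hcomm (by
    intro C hC
    have hs : σ = 1 - (X0 + (0 : ℝ) • H) := by rw [hX0]; simp
    have hC' : Commute C (X0 + (0 : ℝ) • H) := by
      have : X0 + (0 : ℝ) • H = 1 - σ := by rw [hX0]; simp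
      rw [this]
      exact (Commute.one_right C).sub_right hC
    have := hT C hC'
    rw [← hs] at this
    rw [mul_neg, trace_neg, this, ← neg_sub σ ρ, ← hH, mul_neg, trace_neg])
  refine ⟨hgan.congr hfg.symm, ?_, ?_, ?_⟩
  · rw [hfg.eq_of_nhds]
    simp [g, hL0']
  · rw [hfg.deriv_eq, hgd.self_of_nhds]
    simp [hL0']
  · rw [iteratedDeriv_succ, iteratedDeriv_one]
    have h1 : deriv f =ᶠ[nhds 0] deriv g := hfg.deriv
    have h2 := h1.trans hgd
    rw [h2.deriv_eq, ← heta]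
    have h3 := (hL.neg.sub_const L0).const_mul (-H)
    have h4 := (R.hasFDerivAt.comp_hasDerivAt 0 h3).deriv
    refine Eq.trans h4 ?_
    rw [hR, hH, neg_sub]

end Mat

lemma bigO_of_analytic {f : ℝ → ℝ} {e : ℝ} (hf : AnalyticAt ℝ f 0) (h0 : f 0 = 0)
    (h1 : deriv f 0 = 0) (h2 : iteratedDeriv 2 f 0 = e) :
    Asymptotics.IsBigO (nhds (0 : ℝ)) (fun α : ℝ => f α - 2⁻¹ * α ^ 2 * e)
      (fun α : ℝ => α ^ 3) := by
  have h := hf.hasFPowerSeriesAt.isBigO_sub_partialSum_pow 3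
  refine (h.congr_left ?_).trans ?_
  · intro y
    simp [FormalMultilinearSeries.partialSum, Finset.sum_range_succ, iteratedDeriv_one, h0, h1, h2,
      FormalMultilinearSeries.ofScalars_apply_eq]
    ring
  · refine Asymptotics.IsBigO.of_bound 1 (Eventually.of_forall fun y => ?_)
    simp

/-- **Identification of the η-divergence with the quantum chi-square divergence**:
`(∂²/∂α²) D(αρ+(1−α)σ‖σ)|_{α=0} = η(ρ‖σ)`, and equivalently
`D(αρ+(1−α)σ‖σ) = (1/2)α²η(ρ‖σ) + O(α³)` as `α → 0`. -/
theorem eta_eq_chi_square {ι : Type*} [Fintype ι] [DecidableEq ι]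
    {s : Type*} [Fintype s] [DecidableEq s]
    (ρ σ : Matrix ι ι ℂ) (hρ : IsDensity ρ) (hσ : IsDensity σ) (hσpd : σ.PosDef)
    (lam : s → ℝ) (P : s → Matrix ι ι ℂ)
    (hinj : Function.Injective lam)
    (hherm : ∀ i, (P i).IsHermitian)
    (hproj : ∀ i, P i * P i = P i)
    (horth : ∀ i j, i ≠ j → P i * P j = 0)
    (hres : ∑ i, P i = 1)
    (hspec : σ = ∑ i, ((lam i : ℝ) : ℂ) • P i) :
    chiSq ρ σ = etaDiv lam P ρ σ ∧
    Asymptotics.IsBigO (nhds (0 : ℝ))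
      (fun α : ℝ => relEnt ((α : ℂ) • ρ + ((1 - α : ℝ) : ℂ) • σ) σ -
        2⁻¹ * α ^ 2 * etaDiv lam P ρ σ)
      (fun α : ℝ => α ^ 3) := by
  obtain ⟨ha, h0, h1, h2⟩ := core ρ σ hρ hσ hσpd lam P hinj hherm hproj horth hres hspec _ rfl
  exact ⟨h2, bigO_of_analytic ha h0 h1 h2⟩

end Statement13

end CovertPaper
end
end

section
/- Key-rate lower bound via secrecy continuity: Consider a covert secrecy code with deterministic encoder x^n = f(m,k), uniform and independent secret message m ∈ M and key k ∈ K, and no public message, over the binary-input classical-quantum channel. If the secrecy criterion (1/|M|)Σ_m ||ρ_{W^n}^{(m)} − ρ̆_{W^n}||_1 ≤ δ_sec holds for some state ρ̆_{W^n} not depending on m, then log|K| ≥ I(k; W^n | m)_ρ ≥ I(mk; W^n)_ρ − δ_sec log|M| − g_2(δ_sec) = I(x^n; W^n)_{ρ̄} − δ_sec log|M| − g_2(δ_sec), where g_2(x) = (1+x) h_2(x/(1+x)) and h_2 is the binary entropy. -/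
open Matrix Filter
open scoped Kronecker Classical ComplexOrder

noncomputable section

namespace CovertPaper



variable {ι : Type*} [Fintype ι] [DecidableEq ι]

section Statement18

/-- Binary entropy (natural logarithm). -/
def binEnt (p : ℝ) : ℝ := -(p * Real.log p) - (1 - p) * Real.log (1 - p)

/-- `g₂(x) = (1+x) h₂(x/(1+x))`. -/
def g2 (x : ℝ) : ℝ := (1 + x) * binEnt (x / (1 + x))

variable {B W : Type*} [Fintype B] [DecidableEq B] [Fintype W] [DecidableEq W]

/-- Willie's state `ρ_{W^n}^{(m)}` averaged over the uniform key. -/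
def wMsg (π : Fin 2 → Matrix (B × W) (B × W) ℂ)
    {n M K : ℕ} (f : Fin M → Fin K → Fin n → Fin 2) (m : Fin M) :
    Matrix (Fin n → W) (Fin n → W) ℂ :=
  (((K : ℝ)⁻¹ : ℝ) : ℂ) • ∑ k, willieWord π (f m k)

/-- Willie's state `ρ̄_{W^n}` averaged over the uniform message and key. -/
def wBar (π : Fin 2 → Matrix (B × W) (B × W) ℂ)
    {n M K : ℕ} (f : Fin M → Fin K → Fin n → Fin 2) :
    Matrix (Fin n → W) (Fin n → W) ℂ :=
  ((((M : ℝ) * K)⁻¹ : ℝ) : ℂ) • ∑ m, ∑ k, willieWord π (f m k)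

/-- The conditional quantum mutual information `I(k;W^n|m)` of the classical-classical-quantum
state of uniform independent `(m,k)` and Willie's output. -/
def condMI (π : Fin 2 → Matrix (B × W) (B × W) ℂ)
    {n M K : ℕ} (f : Fin M → Fin K → Fin n → Fin 2) : ℝ :=
  (M : ℝ)⁻¹ * ∑ m, (vnEnt (wMsg π f m) - (K : ℝ)⁻¹ * ∑ k, vnEnt (willieWord π (f m k)))

/-- The quantum mutual information `I(mk;W^n)`. -/
def jointMI (π : Fin 2 → Matrix (B × W) (B × W) ℂ)
    {n M K : ℕ} (f : Fin M → Fin K → Fin n → Fin 2) : ℝ :=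
  vnEnt (wBar π f) - ((M : ℝ) * K)⁻¹ * ∑ m, ∑ k, vnEnt (willieWord π (f m k))

/-- The Holevo information `I(x^n;W^n)` of the induced input distribution. -/
def inputMI (π : Fin 2 → Matrix (B × W) (B × W) ℂ)
    {n M K : ℕ} (f : Fin M → Fin K → Fin n → Fin 2) : ℝ :=
  vnEnt (wBar π f) - ∑ x : Fin n → Fin 2,
    (((Finset.univ.filter (fun p : Fin M × Fin K => f p.1 p.2 = x)).card : ℝ) /
        ((M : ℝ) * K)) * vnEnt (willieWord π x)

section Helpers

set_option linter.unusedSectionVars false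

variable {d : Type*} [Fintype d] [DecidableEq d]

lemma contOn (f : ℝ → ℝ) (A : Matrix d d ℂ) : ContinuousOn f (spectrum ℝ A) :=
  (Matrix.finite_real_spectrum (A := A)).continuousOn f

lemma matFun_eq_cfc (f : ℝ → ℝ) {A : Matrix d d ℂ} (hA : A.IsHermitian) :
    matFun f A = cfc f A := by
  rw [matFun, dif_pos hA, hA.cfc_eq, Matrix.IsHermitian.cfc, Unitary.conjStarAlgAut_apply]
  rfl

lemma cfc_herm (f : ℝ → ℝ) (A : Matrix d d ℂ) : (cfc f A).IsHermitian :=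
  cfc_predicate f A

lemma trace_cfc (f : ℝ → ℝ) {A : Matrix d d ℂ} (hA : A.IsHermitian) :
    ((cfc f A).trace).re = ∑ i, f (hA.eigenvalues i) := by
  rw [← matFun_eq_cfc f hA, matFun, dif_pos hA, Matrix.trace_mul_comm, ← mul_assoc]
  simp [Matrix.trace_diagonal]

/-- Double spectral formula. -/
lemma trace_cfc_mul {A B : Matrix d d ℂ} (hA : A.IsHermitian) (hB : B.IsHermitian) :
    ∃ w : d → d → ℝ, (∀ i j, 0 ≤ w i j) ∧ ∀ f g : ℝ → ℝ,
      ((cfc f A * cfc g B).trace).re =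
        ∑ i, ∑ j, w i j * (f (hA.eigenvalues i) * g (hB.eigenvalues j)) := by
  set U : Matrix d d ℂ := (hA.eigenvectorUnitary : Matrix d d ℂ) with hU
  set V : Matrix d d ℂ := (hB.eigenvectorUnitary : Matrix d d ℂ) with hV
  refine ⟨fun i j => Complex.normSq ((star U * V) i j), fun i j => Complex.normSq_nonneg _, ?_⟩
  intro f g
  rw [← matFun_eq_cfc f hA, ← matFun_eq_cfc g hB, matFun, matFun, dif_pos hA, dif_pos hB,
    ← hU, ← hV]
  have : (U * diagonal (fun i => (f (hA.eigenvalues i) : ℂ)) * star U *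
      (V * diagonal (fun i => (g (hB.eigenvalues i) : ℂ)) * star V)).trace
      = (diagonal (fun i => (f (hA.eigenvalues i) : ℂ)) * (star U * V) *
        (diagonal (fun i => (g (hB.eigenvalues i) : ℂ)) * star (star U * V))).trace := by
    rw [star_mul, star_star]
    simp only [mul_assoc]
    rw [Matrix.trace_mul_comm]
    simp only [mul_assoc]
  rw [this, Matrix.trace]
  simp only [Matrix.diag_apply, Matrix.mul_apply (M := _ * _), Complex.re_sum]
  refine Finset.sum_congr rfl fun i _ => Finset.sum_congr rfl fun j _ => ?_
  rw [Matrix.diagonal_mul, Matrix.diagonal_mul, Matrix.star_apply]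
  have : (f (hA.eigenvalues i) : ℂ) * (star U * V) i j *
      ((g (hB.eigenvalues j) : ℂ) * star ((star U * V) i j)) =
      ((Complex.normSq ((star U * V) i j) * (f (hA.eigenvalues i) * g (hB.eigenvalues j)) : ℝ) : ℂ) := by
    have h := Complex.mul_conj ((star U * V) i j)
    push_cast
    rw [← h]
    simp only [← starRingEnd_apply]
    ring
  rw [this, Complex.ofReal_re]

lemma posDef_eig {A : Matrix d d ℂ} (hA : A.PosDef) (i : d) : 0 < hA.isHermitian.eigenvalues i :=
  hA.eigenvalues_pos i

/-- Klein's inequality, unnormalized. -/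
lemma klein {A B : Matrix d d ℂ} (hA : A.PosDef) (hB : B.PosDef) :
    (A.trace).re - (B.trace).re ≤
      ((A * cfc Real.log A).trace).re - ((A * cfc Real.log B).trace).re := by
  have hA' := hA.isHermitian
  have hB' := hB.isHermitian
  obtain ⟨w, hw, h⟩ := trace_cfc_mul hA' hB'
  have i1 : cfc (fun x : ℝ => x) A = A := cfc_id' ℝ A hA'
  have i2 : cfc (fun x : ℝ => x) B = B := cfc_id' ℝ B hB'
  have o1 : cfc (fun _ : ℝ => (1:ℝ)) A = 1 := cfc_const_one ℝ A hA'
  have o2 : cfc (fun _ : ℝ => (1:ℝ)) B = 1 := cfc_const_one ℝ B hB'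
  have e1 := h (fun x => x) (fun _ => 1)
  have e2 := h (fun _ => 1) (fun x => x)
  have e3 := h (fun x => x) Real.log
  have e4 := h (fun x => x * Real.log x) (fun _ => 1)
  have p : cfc (fun x : ℝ => x * Real.log x) A = A * cfc Real.log A := by
    rw [cfc_mul (fun x : ℝ => x) Real.log A (contOn _ _) (contOn _ _), i1]
  rw [i1, o2, mul_one] at e1
  rw [o1, i2, one_mul] at e2
  rw [i1] at e3
  rw [p, o2, mul_one] at e4
  rw [e1, e2, e3, e4]
  simp only [← Finset.sum_sub_distrib]
  refine Finset.sum_le_sum fun i _ => Finset.sum_le_sum fun j _ => ?_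
  have ha := posDef_eig hA i
  have hb := posDef_eig hB j
  set a := hA'.eigenvalues i
  set b := hB'.eigenvalues j
  have key : a - b ≤ a * Real.log a - a * Real.log b := by
    have := Real.log_le_sub_one_of_pos (div_pos hb ha)
    rw [Real.log_div hb.ne' ha.ne'] at this
    have h2 := mul_le_mul_of_nonneg_left this ha.le
    have : a * (b / a - 1) = b - a := by field_simp
    nlinarith
  have := mul_le_mul_of_nonneg_left key (hw i j)
  nlinarith

open scoped MatrixOrder Matrix.Norms.L2Operator in
/-- Trace form of operator monotonicity of the logarithm. -/
lemma log_mono {A B : Matrix d d ℂ} (hA : A.PosDef) (hAB : (B - A).PosSemidef) :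
    ((A * cfc Real.log A).trace).re ≤ ((A * cfc Real.log B).trace).re := by
  have h : CFC.log A ≤ CFC.log B :=
    CFC.log_le_log (Matrix.le_iff.2 hAB) (Matrix.isStrictlyPositive_iff_posDef.2 hA)
  have h2 : (cfc Real.log B - cfc Real.log A).PosSemidef := Matrix.le_iff.1 h
  have h3 : 0 ≤ (A * (cfc Real.log B - cfc Real.log A)).trace := by
    generalize cfc Real.log B - cfc Real.log A = X at h2 ⊢
    obtain ⟨C, hC⟩ := CStarAlgebra.nonneg_iff_eq_star_mul_self.mp hA.posSemidef.nonneg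
    rw [hC, mul_assoc, Matrix.trace_mul_comm]
    have := (h2.mul_mul_conjTranspose_same C).trace_nonneg
    simpa [Matrix.star_eq_conjTranspose] using this
  have h4 := (Complex.le_def.1 h3).1
  rw [mul_sub, Matrix.trace_sub] at h4
  simpa using h4

lemma vnEnt_eq_cfc {A : Matrix d d ℂ} (hA : A.IsHermitian) :
    vnEnt A = -((A * cfc Real.log A).trace).re := by
  rw [vnEnt, matLog, matFun_eq_cfc _ hA]

lemma vnEnt_eq_sum {A : Matrix d d ℂ} (hA : A.IsHermitian) :
    vnEnt A = ∑ i, Real.negMulLog (hA.eigenvalues i) := by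
  have i1 : cfc (fun x : ℝ => x) A = A := cfc_id' ℝ A hA
  have p : cfc (fun x : ℝ => x * Real.log x) A = A * cfc Real.log A := by
    rw [cfc_mul (fun x : ℝ => x) Real.log A (contOn _ _) (contOn _ _), i1]
  rw [vnEnt_eq_cfc hA, ← p, trace_cfc _ hA, ← Finset.sum_neg_distrib]
  simp [Real.negMulLog]

lemma vnEnt_eq_trace {A : Matrix d d ℂ} (hA : A.IsHermitian) :
    vnEnt A = ((cfc Real.negMulLog A).trace).re := by
  rw [vnEnt_eq_sum hA, trace_cfc _ hA]

lemma trace_eq_sum {A : Matrix d d ℂ} (hA : A.IsHermitian) :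
    (A.trace).re = ∑ i, hA.eigenvalues i := by
  rw [← trace_cfc (fun x => x) hA, cfc_id' ℝ A hA.isSelfAdjoint]

/-- Affine change of the argument. -/
lemma vnEnt_affine {A : Matrix d d ℂ} (hA : A.IsHermitian) (c t : ℝ) :
    vnEnt ((c : ℂ) • A + (t : ℂ) • (1 : Matrix d d ℂ)) =
      ∑ i, Real.negMulLog (c * hA.eigenvalues i + t) := by
  have e : (c : ℂ) • A + (t : ℂ) • (1 : Matrix d d ℂ) = cfc (fun x : ℝ => c * x + t) A := by
    rw [cfc_add (a := A) (fun x : ℝ => c * x) (fun _ => t) (contOn _ _) (contOn _ _),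
      cfc_const_mul c (fun x : ℝ => x) A (contOn _ _), cfc_id' ℝ A hA.isSelfAdjoint, cfc_const t A hA.isSelfAdjoint,
      Algebra.algebraMap_eq_smul_one]
    rfl
  rw [vnEnt_eq_trace (by rw [e]; exact cfc_herm _ _), e,
    ← cfc_comp' Real.negMulLog (fun x : ℝ => c * x + t) A
      ((Matrix.finite_real_spectrum.image _).continuousOn _) (contOn _ _) hA.isSelfAdjoint, trace_cfc _ hA]

lemma vnEnt_smul {A : Matrix d d ℂ} (hA : A.IsHermitian) (c : ℝ) :
    vnEnt ((c : ℂ) • A) = c * vnEnt A - c * Real.log c * (A.trace).re := by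
  have := vnEnt_affine hA c 0
  simp only [Complex.ofReal_zero, zero_smul, add_zero] at this
  rw [this, vnEnt_eq_sum hA, trace_eq_sum hA, Finset.mul_sum, Finset.mul_sum,
    ← Finset.sum_sub_distrib]
  refine Finset.sum_congr rfl fun i _ => ?_
  rw [Real.negMulLog_mul, Real.negMulLog]
  simp only [Real.negMulLog]
  ring

open Topology in
lemma vnEnt_tendsto {A : Matrix d d ℂ} (hA : A.IsHermitian) (c : ℝ) :
    Tendsto (fun t : ℝ => vnEnt (A + ((c * t : ℝ) : ℂ) • (1 : Matrix d d ℂ))) (𝓝[>] 0)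
      (𝓝 (vnEnt A)) := by
  have : ∀ t : ℝ, vnEnt (A + ((c * t : ℝ) : ℂ) • (1 : Matrix d d ℂ)) =
      ∑ i, Real.negMulLog (hA.eigenvalues i + c * t) := by
    intro t
    have := vnEnt_affine hA 1 (c * t)
    simpa using this
  simp only [this]
  rw [vnEnt_eq_sum hA]
  refine Tendsto.mono_left ?_ nhdsWithin_le_nhds
  have h : Continuous (fun t : ℝ => ∑ i, Real.negMulLog (hA.eigenvalues i + c * t)) :=
    continuous_finsetSum _ fun i _ => Real.continuous_negMulLog.comp (by fun_prop)
  simpa using h.tendsto 0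

lemma shift_posDef {A : Matrix d d ℂ} (hA : A.PosSemidef) {t : ℝ} (ht : 0 < t) :
    (A + (t : ℂ) • (1 : Matrix d d ℂ)).PosDef :=
  Matrix.PosDef.posSemidef_add hA (Matrix.PosDef.one.smul (by exact_mod_cast ht))

lemma trace_pos_of_posDef [Nonempty d] {A : Matrix d d ℂ} (hA : A.PosDef) : 0 < (A.trace).re := by
  rw [trace_eq_sum hA.isHermitian]
  exact Finset.sum_pos (fun i _ => posDef_eig hA i) Finset.univ_nonempty

lemma psd_trace_nonneg {A : Matrix d d ℂ} (hA : A.PosSemidef) : 0 ≤ (A.trace).re :=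
  (Complex.le_def.1 hA.trace_nonneg).1

lemma klein_norm {A B : Matrix d d ℂ} (hA : A.PosDef) (hB : B.PosDef) :
    (A.trace).re * Real.log (A.trace).re - (A.trace).re * Real.log (B.trace).re ≤
      ((A * cfc Real.log A).trace).re - ((A * cfc Real.log B).trace).re := by
  rcases isEmpty_or_nonempty d with he | he
  · simp [Matrix.trace]
  have ha := trace_pos_of_posDef hA
  have hb := trace_pos_of_posDef hB
  set a := (A.trace).re with hadef
  set b := (B.trace).re with hbdef
  have hc : 0 < a / b := div_pos ha hb
  have hcB : (((a / b : ℝ) : ℂ) • B).PosDef := hB.smul (by exact_mod_cast hc)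
  have h := klein hA hcB
  have e : cfc Real.log (((a / b : ℝ) : ℂ) • B) =
      ((Real.log (a / b) : ℝ) : ℂ) • (1 : Matrix d d ℂ) + cfc Real.log B := by
    have e1 : ((a / b : ℝ) : ℂ) • B = cfc (fun x : ℝ => (a / b) * x) B := by
      rw [cfc_const_mul (a / b) (fun x : ℝ => x) B (contOn _ _),
        cfc_id' ℝ B hB.isHermitian.isSelfAdjoint]
      rfl
    rw [e1, ← cfc_comp' Real.log (fun x : ℝ => (a / b) * x) B
      ((Matrix.finite_real_spectrum.image _).continuousOn _) (contOn _ _)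
      hB.isHermitian.isSelfAdjoint]
    have e2 : cfc (fun x : ℝ => Real.log (a / b * x)) B
        = cfc (fun x : ℝ => Real.log (a / b) + Real.log x) B := by
      refine cfc_congr fun x hx => ?_
      rw [hB.isHermitian.spectrum_real_eq_range_eigenvalues] at hx
      obtain ⟨i, rfl⟩ := hx
      exact Real.log_mul hc.ne' (posDef_eig hB i).ne'
    rw [e2, cfc_add (a := B) (fun _ : ℝ => Real.log (a / b)) Real.log (contOn _ _) (contOn _ _),
      cfc_const _ B hB.isHermitian.isSelfAdjoint, Algebra.algebraMap_eq_smul_one]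
    rfl
  rw [e, mul_add, Matrix.trace_add, Matrix.trace_smul, Complex.add_re, Matrix.mul_smul, mul_one,
    Matrix.trace_smul, smul_eq_mul, smul_eq_mul, Complex.re_ofReal_mul, Complex.re_ofReal_mul,
    ← hadef, ← hbdef, div_mul_cancel₀ _ hb.ne', sub_self, Real.log_div ha.ne' hb.ne'] at h
  nlinarith

open Topology in
lemma trace_tendsto (A : Matrix d d ℂ) (c : ℝ) :
    Tendsto (fun t : ℝ => ((A + ((c * t : ℝ) : ℂ) • (1 : Matrix d d ℂ)).trace).re) (𝓝[>] 0)
      (𝓝 (A.trace).re) := by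
  refine Tendsto.mono_left ?_ nhdsWithin_le_nhds
  have h : Continuous
      (fun t : ℝ => ((A + ((c * t : ℝ) : ℂ) • (1 : Matrix d d ℂ)).trace).re) := by
    simp only [Matrix.trace_add, Matrix.trace_smul]
    fun_prop
  simpa using h.tendsto 0

/-- Subadditivity of the unnormalized entropy. -/
lemma vnEnt_add_le {A B : Matrix d d ℂ} (hA : A.PosSemidef) (hB : B.PosSemidef) :
    vnEnt (A + B) ≤ vnEnt A + vnEnt B := by
  have hAB := hA.add hB
  refine le_of_tendsto_of_tendsto (vnEnt_tendsto hAB.isHermitian 2)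
    ((vnEnt_tendsto hA.isHermitian 1).add (vnEnt_tendsto hB.isHermitian 1)) ?_
  filter_upwards [self_mem_nhdsWithin] with t (ht : 0 < t)
  have hA' := shift_posDef hA (t := 1 * t) (by linarith)
  have hB' := shift_posDef hB (t := 1 * t) (by linarith)
  have hAB' := shift_posDef hAB (t := 2 * t) (by linarith)
  have e : A + B + ((2 * t : ℝ) : ℂ) • (1 : Matrix d d ℂ) =
      (A + ((1 * t : ℝ) : ℂ) • (1 : Matrix d d ℂ)) + (B + ((1 * t : ℝ) : ℂ) • (1 : Matrix d d ℂ)) := by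
    push_cast
    module
  rw [vnEnt_eq_cfc hAB'.isHermitian, vnEnt_eq_cfc hA'.isHermitian, vnEnt_eq_cfc hB'.isHermitian]
  rw [e] at hAB' ⊢
  generalize A + ((1 * t : ℝ) : ℂ) • (1 : Matrix d d ℂ) = X at *
  generalize B + ((1 * t : ℝ) : ℂ) • (1 : Matrix d d ℂ) = Y at *
  have h1 := log_mono (A := X) (B := X + Y) hA' (by simpa using hB'.posSemidef)
  have h2 := log_mono (A := Y) (B := X + Y) hB' (by simpa using hA'.posSemidef)
  rw [add_mul, Matrix.trace_add, Complex.add_re]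
  linarith

lemma vnEnt_zero : vnEnt (0 : Matrix d d ℂ) = 0 := by simp [vnEnt]

lemma vnEnt_sum_le {κ : Type*} (s : Finset κ) (A : κ → Matrix d d ℂ)
    (hA : ∀ i, (A i).PosSemidef) : vnEnt (∑ i ∈ s, A i) ≤ ∑ i ∈ s, vnEnt (A i) := by
  induction s using Finset.induction_on with
  | empty => simp [vnEnt_zero]
  | insert a s ha ih =>
    rw [Finset.sum_insert ha, Finset.sum_insert ha]
    have := vnEnt_add_le (hA a) (Matrix.posSemidef_sum s fun i _ => hA i)
    linarith

/-- Almost-superadditivity. -/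
lemma vnEnt_add_ge {A B : Matrix d d ℂ} (hA : A.PosSemidef) (hB : B.PosSemidef) :
    vnEnt A + vnEnt B - (Real.negMulLog (A.trace).re + Real.negMulLog (B.trace).re
      - Real.negMulLog ((A + B).trace).re) ≤ vnEnt (A + B) := by
  have hAB := hA.add hB
  have cn := Real.continuous_negMulLog
  refine le_of_tendsto_of_tendsto (((vnEnt_tendsto hA.isHermitian 1).add
    (vnEnt_tendsto hB.isHermitian 1)).sub ((((cn.tendsto _).comp (trace_tendsto A 1)).add
    ((cn.tendsto _).comp (trace_tendsto B 1))).sub ((cn.tendsto _).comp (trace_tendsto (A + B) 2))))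
    (vnEnt_tendsto hAB.isHermitian 2) ?_
  filter_upwards [self_mem_nhdsWithin] with t (ht : 0 < t)
  have hA' := shift_posDef hA (t := 1 * t) (by linarith)
  have hB' := shift_posDef hB (t := 1 * t) (by linarith)
  have hAB' := shift_posDef hAB (t := 2 * t) (by linarith)
  have e : A + B + ((2 * t : ℝ) : ℂ) • (1 : Matrix d d ℂ) =
      (A + ((1 * t : ℝ) : ℂ) • (1 : Matrix d d ℂ)) + (B + ((1 * t : ℝ) : ℂ) • (1 : Matrix d d ℂ)) := by
    push_cast
    module
  simp only [Function.comp_apply]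
  rw [vnEnt_eq_cfc hAB'.isHermitian, vnEnt_eq_cfc hA'.isHermitian, vnEnt_eq_cfc hB'.isHermitian]
  rw [e] at hAB' ⊢
  generalize A + ((1 * t : ℝ) : ℂ) • (1 : Matrix d d ℂ) = X at *
  generalize B + ((1 * t : ℝ) : ℂ) • (1 : Matrix d d ℂ) = Y at *
  have h1 := klein_norm hA' hAB'
  have h2 := klein_norm hB' hAB'
  simp only [Real.negMulLog]
  rw [add_mul, Matrix.trace_add (X * _), Complex.add_re]
  have h3 : ((X + Y).trace).re = (X.trace).re + (Y.trace).re := by simp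
  have h4 := congrArg (fun r => r * Real.log ((X + Y).trace).re) h3
  simp only [add_mul] at h4
  linarith

/-- Uniform average of matrices. -/
def avg {M : ℕ} (A : Fin M → Matrix d d ℂ) : Matrix d d ℂ := (((M : ℝ)⁻¹ : ℝ) : ℂ) • ∑ m, A m

lemma avg_psd {M : ℕ} {A : Fin M → Matrix d d ℂ} (hA : ∀ i, (A i).PosSemidef) :
    (avg A).PosSemidef :=
  (Matrix.posSemidef_sum _ fun i _ => hA i).smul (by
    have : (0:ℝ) ≤ (M : ℝ)⁻¹ := by positivity
    exact_mod_cast this)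

lemma avg_shift {M : ℕ} (hM : 0 < M) (A : Fin M → Matrix d d ℂ) (X : Matrix d d ℂ) :
    avg (fun m => A m + X) = avg A + X := by
  have : (M : ℂ) ≠ 0 := by exact_mod_cast hM.ne'
  simp only [avg, Finset.sum_add_distrib, smul_add]
  congr 1
  rw [Finset.sum_const, Finset.card_univ, Fintype.card_fin, ← Nat.cast_smul_eq_nsmul ℂ, smul_smul]
  simp [this]

lemma avg_mul_trace {M : ℕ} (A : Fin M → Matrix d d ℂ) (X : Matrix d d ℂ) :
    ((avg A * X).trace).re = (M : ℝ)⁻¹ * ∑ m, ((A m * X).trace).re := by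
  rw [avg, Matrix.smul_mul, Matrix.trace_smul, smul_eq_mul, Complex.re_ofReal_mul,
    Finset.sum_mul, Matrix.trace_sum, Complex.re_sum]

lemma avg_trace {M : ℕ} (A : Fin M → Matrix d d ℂ) :
    ((avg A).trace).re = (M : ℝ)⁻¹ * ∑ m, ((A m).trace).re := by
  simpa using avg_mul_trace A 1

/-- Concavity of the entropy. -/
lemma vnEnt_concave {M : ℕ} (hM : 0 < M) {A : Fin M → Matrix d d ℂ}
    (hA : ∀ i, (A i).PosSemidef) : (M : ℝ)⁻¹ * ∑ m, vnEnt (A m) ≤ vnEnt (avg A) := by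
  refine le_of_tendsto_of_tendsto
    ((tendsto_finsetSum _ fun m _ => vnEnt_tendsto (hA m).isHermitian 1).const_mul _)
    (vnEnt_tendsto (avg_psd hA).isHermitian 1) ?_
  filter_upwards [self_mem_nhdsWithin] with t (ht : 0 < t)
  have hA' := fun m => shift_posDef (hA m) (t := 1 * t) (by linarith)
  have hB' := shift_posDef (avg_psd hA) (t := 1 * t) (by linarith)
  rw [← avg_shift hM] at hB' ⊢
  rw [vnEnt_eq_cfc hB'.isHermitian, avg_mul_trace, ← mul_neg, ← Finset.sum_neg_distrib]
  have hM' : (0:ℝ) < M := by exact_mod_cast hM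
  refine mul_le_mul_of_nonneg_left ?_ (by positivity)
  have hk := Finset.sum_le_sum fun m (_ : m ∈ Finset.univ) => klein (hA' m) hB'
  simp only [Finset.sum_sub_distrib, avg_trace] at hk
  rw [Finset.sum_const, Finset.card_univ, Fintype.card_fin, nsmul_eq_mul, ← mul_assoc,
    mul_inv_cancel₀ hM'.ne'] at hk
  simp only [fun m => vnEnt_eq_cfc (hA' m).isHermitian, Finset.sum_neg_distrib]
  linarith

/-- Max-information bound. -/
lemma chi_le_log {M : ℕ} (hM : 0 < M) {A : Fin M → Matrix d d ℂ} {T : Matrix d d ℂ}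
    (hA : ∀ i, (A i).PosSemidef) (h1 : ∀ i, ((A i).trace).re = 1)
    (hT : T.PosSemidef) (hT1 : 0 < (T.trace).re) (hAT : ∀ i, (T - A i).PosSemidef) :
    vnEnt (avg A) - (M : ℝ)⁻¹ * ∑ m, vnEnt (A m) ≤ Real.log (T.trace).re := by
  have hM' : (0:ℝ) < M := by exact_mod_cast hM
  have htr : ((avg A).trace).re = 1 := by
    rw [avg_trace]
    simp [h1, hM'.ne']
  have cn := Real.continuous_negMulLog
  have key : vnEnt (avg A) - (M : ℝ)⁻¹ * ∑ m, vnEnt (A m) ≤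
      ((avg A).trace).re * Real.log (T.trace).re + Real.negMulLog ((avg A).trace).re := by
    refine le_of_tendsto_of_tendsto ((vnEnt_tendsto (avg_psd hA).isHermitian 1).sub
      ((tendsto_finsetSum _ fun m _ => vnEnt_tendsto (hA m).isHermitian 1).const_mul _))
      (((trace_tendsto (avg A) 1).mul ((Real.continuousAt_log hT1.ne').tendsto.comp
        (trace_tendsto T 1))).add ((cn.tendsto _).comp (trace_tendsto (avg A) 1))) ?_
    filter_upwards [self_mem_nhdsWithin] with t (ht : 0 < t)
    have hA' := fun m => shift_posDef (hA m) (t := 1 * t) (by linarith)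
    have hB' := shift_posDef (avg_psd hA) (t := 1 * t) (by linarith)
    have hT' := shift_posDef hT (t := 1 * t) (by linarith)
    have hm := fun m => log_mono (hA' m) (B := T + ((1 * t : ℝ) : ℂ) • (1 : Matrix d d ℂ))
      (by simpa using hAT m)
    simp only [Function.comp_apply]
    rw [← avg_shift hM] at hB' ⊢
    have hk := klein_norm hB' hT'
    rw [avg_mul_trace (X := cfc Real.log (T + _))] at hk
    have hs := mul_le_mul_of_nonneg_left (Finset.sum_le_sum fun m (_ : m ∈ Finset.univ) => hm m)
      (inv_nonneg.2 hM'.le)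
    rw [vnEnt_eq_cfc hB'.isHermitian]
    simp only [fun m => vnEnt_eq_cfc (hA' m).isHermitian, Finset.sum_neg_distrib, Real.negMulLog]
    linarith
  rw [htr] at key
  simpa using key

/-- Holevo quantity is at most `(trace) * log M`. -/
lemma chi_le {M : ℕ} (hM : 0 < M) {A : Fin M → Matrix d d ℂ}
    (hA : ∀ i, (A i).PosSemidef) :
    vnEnt (avg A) ≤ (M : ℝ)⁻¹ * ∑ m, vnEnt (A m) +
      ((M : ℝ)⁻¹ * ∑ m, ((A m).trace).re) * Real.log M := by
  have hc : (0:ℂ) ≤ (((M : ℝ)⁻¹ : ℝ) : ℂ) := by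
    have : (0:ℝ) ≤ (M : ℝ)⁻¹ := by positivity
    exact_mod_cast this
  have h := vnEnt_sum_le Finset.univ (fun m => (((M : ℝ)⁻¹ : ℝ) : ℂ) • A m)
    (fun m => (hA m).smul hc)
  rw [← Finset.smul_sum] at h
  refine h.trans (le_of_eq ?_)
  simp only [fun m => vnEnt_smul (hA m).isHermitian, Finset.sum_sub_distrib, ← Finset.mul_sum,
    Real.log_inv]
  ring

lemma cfc_psd (f : ℝ → ℝ) (hf : ∀ x, 0 ≤ f x) {A : Matrix d d ℂ} (hA : A.IsHermitian) :
    (cfc f A).PosSemidef := by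
  rw [← matFun_eq_cfc f hA, matFun, dif_pos hA, Matrix.star_eq_conjTranspose]
  refine Matrix.PosSemidef.mul_mul_conjTranspose_same ?_ _
  exact Matrix.PosSemidef.diagonal fun i => by
    simpa using hf _

lemma traceNorm_eq {A : Matrix d d ℂ} (hA : A.IsHermitian) :
    traceNorm A = ∑ i, |hA.eigenvalues i| := by
  have e : Aᴴ * A = cfc (fun x : ℝ => x * x) A := by
    rw [cfc_mul (fun x : ℝ => x) (fun x : ℝ => x) A (contOn _ _) (contOn _ _),
      cfc_id' ℝ A hA.isSelfAdjoint, hA.eq]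
  rw [traceNorm, e, matFun_eq_cfc _ (cfc_herm _ _),
    ← cfc_comp' Real.sqrt (fun x : ℝ => x * x) A
      ((Matrix.finite_real_spectrum.image _).continuousOn _) (contOn _ _) hA.isSelfAdjoint,
    trace_cfc _ hA]
  simp [Real.sqrt_mul_self_eq_abs]

lemma jordan {A : Matrix d d ℂ} (hA : A.IsHermitian) (h0 : (A.trace).re = 0) :
    ∃ P N : Matrix d d ℂ, P.PosSemidef ∧ N.PosSemidef ∧ A + N = P ∧
      (P.trace).re = traceNorm A / 2 ∧ (N.trace).re = traceNorm A / 2 := by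
  refine ⟨cfc (fun x : ℝ => max x 0) A, cfc (fun x : ℝ => max (-x) 0) A,
    cfc_psd _ (fun x => le_max_right _ _) hA, cfc_psd _ (fun x => le_max_right _ _) hA, ?_, ?_⟩
  · have h := cfc_add (a := A) (fun x : ℝ => x) (fun x : ℝ => max (-x) 0) (contOn _ _) (contOn _ _)
    rw [cfc_id' ℝ A hA.isSelfAdjoint] at h
    rw [← h]
    refine cfc_congr fun x _ => ?_
    rcases le_total x 0 with hx | hx
    · simp [max_eq_left (neg_nonneg.2 hx), max_eq_right hx]
    · simp [max_eq_right (neg_nonpos.2 hx), max_eq_left hx]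
  · rw [trace_cfc _ hA, trace_cfc _ hA, traceNorm_eq hA]
    rw [trace_eq_sum hA] at h0
    have h1 : ∀ x : ℝ, max x 0 = |x| / 2 + x / 2 := fun x => by
      rcases le_total x 0 with hx | hx
      · rw [max_eq_right hx, abs_of_nonpos hx]; ring
      · rw [max_eq_left hx, abs_of_nonneg hx]; ring
    simp only [h1, Finset.sum_add_distrib, ← Finset.sum_div, abs_neg, Finset.sum_neg_distrib, h0]
    simp

lemma g2_eq {x : ℝ} (hx : 0 ≤ x) : g2 x = (1 + x) * Real.log (1 + x) - x * Real.log x := by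
  have h1 : (0:ℝ) < 1 + x := by linarith
  rcases hx.eq_or_lt with rfl | hx
  · simp [g2, binEnt]
  have e : 1 - x / (1 + x) = 1 / (1 + x) := by field_simp; ring
  rw [g2, binEnt, e, Real.log_div hx.ne' h1.ne', Real.log_div one_ne_zero h1.ne', Real.log_one]
  field_simp
  ring

lemma g2_tangent {x e : ℝ} (hx : 0 ≤ x) (he : 0 < e) :
    g2 x ≤ (1 + x) * Real.log (1 + e) - x * Real.log e := by
  rw [g2_eq hx]
  have h1 : (0:ℝ) < 1 + e := by linarith
  have h2 : (0:ℝ) < 1 + x := by linarith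
  rcases hx.eq_or_lt with rfl | hx
  · simpa using Real.log_nonneg (by linarith)
  have a := Real.log_le_sub_one_of_pos (x := e * (1 + x) / (x * (1 + e))) (by positivity)
  have b := Real.log_le_sub_one_of_pos (x := (1 + x) / (1 + e)) (by positivity)
  rw [Real.log_div (by positivity) (by positivity), Real.log_mul (by positivity) (by positivity),
    Real.log_mul (by positivity) (by positivity)] at a
  rw [Real.log_div (by positivity) (by positivity)] at b
  have a' := mul_le_mul_of_nonneg_left a hx.le
  have c : x * (e * (1 + x) / (x * (1 + e)) - 1) + ((1 + x) / (1 + e) - 1) = 0 := by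
    field_simp
    ring
  nlinarith

lemma g2_mono {x y : ℝ} (hx : 0 ≤ x) (hxy : x ≤ y) : g2 x ≤ g2 y := by
  rcases hxy.eq_or_lt with rfl | h
  · exact le_rfl
  have hy : 0 < y := by linarith
  have := g2_tangent hx hy
  rw [g2_eq hy.le]
  have h3 : Real.log y ≤ Real.log (1 + y) := Real.log_le_log hy (by linarith)
  nlinarith

lemma g2_jensen {M : ℕ} (hM : 0 < M) (e : Fin M → ℝ) (he : ∀ m, 0 ≤ e m) :
    (M : ℝ)⁻¹ * ∑ m, g2 (e m) ≤ g2 ((M : ℝ)⁻¹ * ∑ m, e m) := by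
  have hM' : (0:ℝ) < M := by exact_mod_cast hM
  have hs : 0 ≤ ∑ m, e m := Finset.sum_nonneg fun m _ => he m
  rcases hs.eq_or_lt with h | h
  · have h0 := (Finset.sum_eq_zero_iff_of_nonneg fun m _ => he m).1 h.symm
    have h00 : ∀ m, e m = 0 := fun m => h0 m (Finset.mem_univ _)
    simp [h00, g2, binEnt]
  have hpos : 0 < (M : ℝ)⁻¹ * ∑ m, e m := by positivity
  set E := (M : ℝ)⁻¹ * ∑ m, e m with hE
  have h1 := mul_le_mul_of_nonneg_left
    (Finset.sum_le_sum fun m (_ : m ∈ Finset.univ) => g2_tangent (he m) hpos)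
    (inv_nonneg.2 hM'.le)
  refine h1.trans (le_of_eq ?_)
  rw [g2_eq hpos.le, Finset.sum_sub_distrib, ← Finset.sum_mul, ← Finset.sum_mul,
    Finset.sum_add_distrib, Finset.sum_const, Finset.card_univ, Fintype.card_fin, nsmul_eq_mul,
    mul_sub, ← mul_assoc, ← mul_assoc, mul_add, ← hE, mul_one, inv_mul_cancel₀ hM'.ne']

lemma two_g2 {e : ℝ} (he : 0 ≤ e) : 2 * g2 e ≤ g2 (2 * e) + 2 * e * Real.log 2 := by
  rw [g2_eq he, g2_eq (by linarith)]
  rcases he.eq_or_lt with rfl | he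
  · simp
  have hc := Real.convexOn_mul_log
  have h := hc.2 (show (1:ℝ) ∈ Set.Ici 0 by simp)
    (show (1 + 2 * e : ℝ) ∈ Set.Ici 0 from Set.mem_Ici.2 (by linarith))
    (show (0:ℝ) ≤ 1/2 by norm_num) (show (0:ℝ) ≤ 1/2 by norm_num) (by norm_num)
  simp only [smul_eq_mul, Real.log_one] at h
  rw [show (1/2 * 1 + 1/2 * (1 + 2 * e) : ℝ) = 1 + e by ring] at h
  rw [Real.log_mul two_ne_zero he.ne']
  nlinarith

lemma log_le_g2 {x : ℝ} (hx : 0 ≤ x) : Real.log (1 + x) ≤ g2 x := by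
  rw [g2_eq hx]
  rcases hx.eq_or_lt with rfl | hx
  · simp
  have h3 : Real.log x ≤ Real.log (1 + x) := Real.log_le_log hx (by linarith)
  nlinarith

lemma small_case {M : ℕ} (hM : 0 < M) (h3 : M ≤ 3) {e δ : ℝ} (he : 0 ≤ e) (hd : 2 * e ≤ δ) :
    Real.log (1 + M * e) ≤ δ * Real.log M + g2 δ := by
  have hδ : 0 ≤ δ := by linarith
  have hg := log_le_g2 hδ
  interval_cases M
  · have := Real.log_le_log (x := 1 + (1:ℕ) * e) (y := 1 + δ) (by simp; linarith)
      (by simp; linarith)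
    simp only [Nat.cast_one, Real.log_one] at this ⊢
    linarith
  · have := Real.log_le_log (x := 1 + (2:ℕ) * e) (y := 1 + δ) (by push_cast; linarith)
      (by push_cast; linarith)
    have h2 : 0 ≤ δ * Real.log (2:ℕ) := mul_nonneg hδ (Real.log_natCast_nonneg _)
    linarith
  · have := Real.log_le_log (x := 1 + (3:ℕ) * e) (y := (1 + δ) * (1 + δ / 2))
      (by push_cast; linarith) (by push_cast; nlinarith)
    rw [Real.log_mul (by linarith) (by linarith)] at this
    have h4 := Real.log_le_sub_one_of_pos (x := 1 + δ / 2) (by linarith)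
    have h5 : Real.log 2 ≤ Real.log (3:ℕ) := Real.log_le_log (by norm_num) (by norm_num)
    have h6 := Real.log_two_gt_d9
    simp only [Nat.cast_ofNat] at this h5 ⊢
    have h7 : δ * (1/2) ≤ δ * Real.log 3 := mul_le_mul_of_nonneg_left (by linarith) hδ
    linarith

lemma big_case {M : ℕ} (h4 : 4 ≤ M) {e δ : ℝ} (he : 0 ≤ e) (hd : 2 * e ≤ δ) :
    e * Real.log M + 2 * g2 e ≤ δ * Real.log M + g2 δ := by
  have h1 := two_g2 he
  have h2 := g2_mono (x := 2 * e) (by linarith) hd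
  have h3 : 2 * Real.log 2 ≤ Real.log M := by
    rw [← Real.log_rpow (by norm_num)]
    refine Real.log_le_log (by norm_num) ?_
    norm_num
    exact_mod_cast h4
  have h5 : 0 ≤ Real.log (M:ℝ) := Real.log_natCast_nonneg _
  nlinarith

/-- Continuity bound for the Holevo information of a uniform ensemble. -/
lemma chi_bound {M : ℕ} (hM : 0 < M) {A : Fin M → Matrix d d ℂ} {σ : Matrix d d ℂ}
    (hA : ∀ m, IsDensity (A m)) (hσ : IsDensity σ) {δ : ℝ}
    (hsec : (M : ℝ)⁻¹ * ∑ m, traceNorm (A m - σ) ≤ δ) :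
    vnEnt (avg A) - (M : ℝ)⁻¹ * ∑ m, vnEnt (A m) ≤ δ * Real.log M + g2 δ := by
  have hM' : (0:ℝ) < M := by exact_mod_cast hM
  have tA : ∀ m, ((A m).trace).re = 1 := fun m => by rw [(hA m).2]; simp
  have tσ : (σ.trace).re = 1 := by rw [hσ.2]; simp
  choose P N hP hN hPN tP tN using fun m => jordan (A := A m - σ)
    ((hA m).1.isHermitian.sub hσ.1.isHermitian) (by simp [(hA m).2, hσ.2])
  have hPN' : ∀ m, A m + N m = σ + P m := fun m => by rw [← hPN m]; abel
  set e : Fin M → ℝ := fun m => traceNorm (A m - σ) / 2 with hedef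
  have he : ∀ m, 0 ≤ e m := fun m => by
    have := psd_trace_nonneg (hP m)
    rw [tP m] at this
    exact this
  set E := (M : ℝ)⁻¹ * ∑ m, e m with hEdef
  have hE : 0 ≤ E := mul_nonneg (inv_nonneg.2 hM'.le) (Finset.sum_nonneg fun m _ => he m)
  have hEd : 2 * E ≤ δ := by
    refine le_trans (le_of_eq ?_) hsec
    rw [hEdef, hedef, ← Finset.sum_div]
    ring
  by_cases h3 : M ≤ 3
  · have hT : (σ + ∑ m, P m).PosSemidef := hσ.1.add (Matrix.posSemidef_sum _ fun m _ => hP m)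
    have tT : ((σ + ∑ m, P m).trace).re = 1 + M * E := by
      rw [Matrix.trace_add, Complex.add_re, tσ, Matrix.trace_sum, Complex.re_sum, hEdef,
        ← mul_assoc, mul_inv_cancel₀ hM'.ne', one_mul]
      simp only [tP]
      rfl
    have := chi_le_log hM (T := σ + ∑ m, P m) (fun m => (hA m).1) tA hT
      (by rw [tT]; positivity) (fun m => by
        have : σ + ∑ m, P m - A m = N m + ∑ i ∈ Finset.univ.erase m, P i := by
          rw [← Finset.add_sum_erase _ _ (Finset.mem_univ m), ← add_assoc, ← hPN' m]
          abel
        rw [this]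
        exact (hN m).add (Matrix.posSemidef_sum _ fun m _ => hP m))
    rw [tT] at this
    exact this.trans (small_case hM h3 hE hEd)
  · refine le_trans ?_ (big_case (by omega : 4 ≤ M) hE hEd)
    have g2neg : ∀ x : ℝ, 0 ≤ x → Real.negMulLog 1 + Real.negMulLog x - Real.negMulLog (1 + x)
        = g2 x := fun x hx => by
      rw [g2_eq hx]; simp only [Real.negMulLog, Real.log_one]; ring
    have tavg : ∀ X : Fin M → Matrix d d ℂ, (∀ m, ((X m).trace).re = e m) →
        ((avg X).trace).re = E := fun X hX => by
      rw [avg_trace]; simp only [hX]; rfl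
    have tavgA : ((avg A).trace).re = 1 := by
      rw [avg_trace]; simp [tA, hM'.ne']
    have pA := avg_psd (fun m => (hA m).1)
    have pN := avg_psd hN
    have pP := avg_psd hP
    have s1 := vnEnt_add_ge pA pN
    rw [Matrix.trace_add, Complex.add_re, tavgA, tavg N tN, g2neg _ hE] at s1
    have eq1 : avg A + avg N = σ + avg P := by
      have : avg A + avg N = avg (fun m => P m + σ) := by
        simp only [avg, ← smul_add, ← Finset.sum_add_distrib, hPN', add_comm σ]
      rw [this, avg_shift hM, add_comm]
    rw [eq1] at s1
    have s2 := vnEnt_add_le hσ.1 pP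
    have s3 := chi_le hM hP
    have s4 := vnEnt_concave hM hN
    have s5 : ∀ m, vnEnt σ + vnEnt (P m) - g2 (e m) - vnEnt (N m) ≤ vnEnt (A m) := fun m => by
      have a := vnEnt_add_le (hA m).1 (hN m)
      have b := vnEnt_add_ge hσ.1 (hP m)
      rw [Matrix.trace_add, Complex.add_re, tσ, tP m, g2neg _ (he m)] at b
      rw [hPN' m] at a
      linarith
    have s6 := mul_le_mul_of_nonneg_left
      (Finset.sum_le_sum fun m (_ : m ∈ Finset.univ) => s5 m) (inv_nonneg.2 hM'.le)
    have s7 := g2_jensen hM e he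
    rw [← hEdef] at s7
    simp only [Finset.sum_sub_distrib, Finset.sum_add_distrib, Finset.sum_const, Finset.card_univ,
      Fintype.card_fin, nsmul_eq_mul, mul_sub, mul_add] at s6
    rw [← mul_assoc, inv_mul_cancel₀ hM'.ne', one_mul] at s6
    have s8 : (M : ℝ)⁻¹ * ∑ m, ((P m).trace).re = E := by simp only [tP]; rfl
    rw [s8] at s3
    linarith

lemma ptraceLeft_density {α β : Type*} [Fintype α] [Fintype β]
    {ρ : Matrix (α × β) (α × β) ℂ} (h : IsDensity ρ) : IsDensity (ptraceLeft ρ) := by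
  constructor
  · have : ptraceLeft ρ = ∑ a, ρ.submatrix (fun b => (a, b)) (fun b => (a, b)) := by
      ext b b'
      simp [ptraceLeft, Matrix.sum_apply]
    rw [this]
    exact Matrix.posSemidef_sum _ fun a _ => h.1.submatrix _
  · rw [← h.2]
    simp only [ptraceLeft, Matrix.trace, Matrix.diag_apply, Matrix.of_apply, Fintype.sum_prod_type]
    exact Finset.sum_comm

open scoped MatrixOrder Matrix.Norms.L2Operator in
lemma psd_factor {β : Type*} [Fintype β] [DecidableEq β] {A : Matrix β β ℂ} (hA : A.PosSemidef) :
    ∃ C : Matrix β β ℂ, A = Cᴴ * C := by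
  obtain ⟨C, hC⟩ := CStarAlgebra.nonneg_iff_eq_star_mul_self.mp hA.nonneg
  exact ⟨C, hC⟩

lemma stringState_density {β : Type*} [Fintype β] [DecidableEq β] {q : ℕ}
    (ω : Fin q → Matrix β β ℂ)
    (h : ∀ x, IsDensity (ω x)) {n : ℕ} (x : Fin n → Fin q) : IsDensity (stringState ω x) := by
  constructor
  · choose C hC using fun y => psd_factor (h y).1
    have : stringState ω x = (stringState C x)ᴴ * stringState C x := by
      ext a b
      simp only [stringState, Matrix.of_apply, Matrix.mul_apply, Matrix.conjTranspose_apply,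
        star_prod]
      simp only [← Finset.prod_mul_distrib]
      rw [← Fintype.prod_sum (fun i c => star (C (x i) c (a i)) * C (x i) c (b i))]
      refine Finset.prod_congr rfl fun i _ => ?_
      conv_lhs => rw [hC (x i)]
      simp [Matrix.mul_apply]
    rw [this]
    exact Matrix.posSemidef_conjTranspose_mul_self _
  · simp only [stringState, Matrix.trace, Matrix.diag_apply, Matrix.of_apply]
    rw [← Fintype.prod_sum (fun i c => ω (x i) c c)]
    refine Finset.prod_eq_one fun i _ => ?_
    exact (h (x i)).2

lemma avg_density {M : ℕ} (hM : 0 < M) {A : Fin M → Matrix d d ℂ} (hA : ∀ m, IsDensity (A m)) :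
    IsDensity (avg A) := by
  refine ⟨avg_psd fun m => (hA m).1, ?_⟩
  have : (M : ℂ) ≠ 0 := by exact_mod_cast hM.ne'
  rw [avg, Matrix.trace_smul, Matrix.trace_sum]
  simp [fun m => (hA m).2, this]

end Helpers

/-- **Key-rate lower bound via secrecy continuity**:
`log|K| ≥ I(k;W^n|m) ≥ I(mk;W^n) − δ_sec log|M| − g₂(δ_sec) = I(x^n;W^n) − δ_sec log|M| − g₂(δ_sec)`. -/
theorem key_rate_lower_bound_via_secrecy
    (π : Fin 2 → Matrix (B × W) (B × W) ℂ)
    (hπ : ∀ x, IsDensity (π x))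
    {n M K : ℕ} (hM : 0 < M) (hK : 0 < K)
    (f : Fin M → Fin K → Fin n → Fin 2)
    (δsec : ℝ) (hδ : 0 ≤ δsec)
    (ρ' : Matrix (Fin n → W) (Fin n → W) ℂ) (hρ' : IsDensity ρ')
    (hsec : (M : ℝ)⁻¹ * ∑ m, traceNorm (wMsg π f m - ρ') ≤ δsec) :
    condMI π f ≤ Real.log K ∧
    jointMI π f - δsec * Real.log M - g2 δsec ≤ condMI π f ∧
    jointMI π f = inputMI π f := by
  have hM' : (0:ℝ) < M := by exact_mod_cast hM
  have hK' : (0:ℝ) < K := by exact_mod_cast hK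
  have hw : ∀ x : Fin n → Fin 2, IsDensity (willieWord π x) := fun x =>
    stringState_density _ (fun y => ptraceLeft_density (hπ y)) x
  have hmsg : ∀ m, IsDensity (wMsg π f m) := fun m =>
    avg_density hK (A := fun k => willieWord π (f m k)) fun k => hw _
  have hbar : wBar π f = avg (wMsg π f) := by
    simp only [wBar, avg, wMsg, ← Finset.smul_sum, smul_smul]
    congr 1
    push_cast
    rw [mul_inv]
  refine ⟨?_, ?_, ?_⟩
  · have h : ∀ m, vnEnt (wMsg π f m) - (K : ℝ)⁻¹ * ∑ k, vnEnt (willieWord π (f m k))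
        ≤ Real.log K := fun m => by
      have := chi_le hK (A := fun k => willieWord π (f m k)) fun k => (hw _).1
      have t : (K : ℝ)⁻¹ * ∑ k : Fin K, ((willieWord π (f m k)).trace).re = 1 := by
        simp [fun x => (hw x).2, hK'.ne']
      rw [t, one_mul] at this
      have e : wMsg π f m = avg (fun k => willieWord π (f m k)) := rfl
      rw [e]
      linarith
    have h2 := mul_le_mul_of_nonneg_left
      (Finset.sum_le_sum fun m (_ : m ∈ Finset.univ) => h m) (inv_nonneg.2 hM'.le)
    rw [Finset.sum_const, Finset.card_univ, Fintype.card_fin, nsmul_eq_mul, ← mul_assoc,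
      inv_mul_cancel₀ hM'.ne', one_mul] at h2
    exact h2
  · have h := chi_bound hM hmsg hρ' hsec
    rw [← hbar] at h
    simp only [jointMI, condMI, Finset.sum_sub_distrib, ← Finset.mul_sum, mul_sub, mul_inv,
      mul_assoc]
    linarith
  · rw [jointMI, inputMI]
    congr 1
    have h1 : ∑ m, ∑ k, vnEnt (willieWord π (f m k)) =
        ∑ x : Fin n → Fin 2,
          ((Finset.univ.filter (fun p : Fin M × Fin K => f p.1 p.2 = x)).card : ℝ) *
            vnEnt (willieWord π x) := by
      rw [← Fintype.sum_prod_type' (fun m k => vnEnt (willieWord π (f m k))),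
        ← Finset.sum_fiberwise_of_maps_to (s := Finset.univ) (t := Finset.univ)
          (g := fun p : Fin M × Fin K => f p.1 p.2) (fun _ _ => Finset.mem_univ _)]
      refine Finset.sum_congr rfl fun x _ => ?_
      rw [Finset.sum_congr rfl (g := fun _ => vnEnt (willieWord π x)), Finset.sum_const,
        nsmul_eq_mul]
      intro p hp
      rw [(Finset.mem_filter.1 hp).2]
    rw [h1, Finset.mul_sum]
    refine Finset.sum_congr rfl fun x _ => ?_
    rw [div_eq_mul_inv]
    ring

end Statement18

end CovertPaper
end
end
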